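/- In a uniform ℤ-graded vertex algebra V, the commutator formula holds: for all a, b, c ∈ V and all m, n ∈ ℤ, a(m)(b(n)c) − b(n)(a(m)c) = Σ_{i≥0} C(m, i) · (a(i)b)(m+n−i) c, where C(m, i) = m(m−1)⋯(m−i+1)/i! is the generalized binomial coefficient and only finitely many terms of the sum are nonzero. -/

import Mathlib

/-- A uniform ℤ-graded vertex algebra: a ℤ-graded complex vector space with bilinear
products `a(n)b`, a translation operator `L₋₁`, and a vacuum `1`, satisfying uniform
locality, translation covariance, the vacuum-field axiom and the creation axiom. -/
structure UniformVertexAlgebra (V : Type*) [AddCommGroup V] [Module ℂ V] where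
  /-- The grading `V = ⊕_{n ∈ ℤ} V_n`. -/
  grading : ℤ → Submodule ℂ V
  /-- The grading is an (internal) direct sum decomposition of `V`. -/
  decomposition : DirectSum.Decomposition grading
  /-- The bilinear products: `mul n a b` is `a(n)b`. -/
  mul : ℤ → V →ₗ[ℂ] V →ₗ[ℂ] V
  /-- The translation operator `L₋₁`. -/
  T : V →ₗ[ℂ] V
  /-- The vacuum vector `1`. -/
  vac : V
  vac_mem : vac ∈ grading 0
  /-- `a(n)` maps `V_m` into `V_{m−n+k−1}` whenever `a ∈ V_k`. -/
  mul_mem : ∀ (n k m : ℤ) (a c : V), a ∈ grading k → c ∈ grading m →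
    mul n a c ∈ grading (m - n + k - 1)
  /-- `L₋₁` has degree one. -/
  T_mem : ∀ (n : ℤ) (a : V), a ∈ grading n → T a ∈ grading (n + 1)
  /-- Uniform locality, in coefficient form: `(z−t)^N [a(z), b(t)] = 0`. -/
  locality : ∀ a b : V, ∃ N : ℕ, ∀ (p q : ℤ) (c : V),
    ∑ r ∈ Finset.range (N + 1),
      ((-1 : ℂ) ^ r * (N.choose r : ℂ)) •
        (mul (p + N - r) a (mul (q + r) b c) - mul (q + r) b (mul (p + N - r) a c)) = 0
  /-- Translation covariance: `[L₋₁, a(n)] = −n·a(n−1)`. -/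
  translation : ∀ (n : ℤ) (a c : V),
    T (mul n a c) - mul n a (T c) = -(n • mul (n - 1) a c)
  T_vac : T vac = 0
  /-- Vacuum field: `1(n)c = c` if `n = −1` and `0` otherwise. -/
  vac_field : ∀ (n : ℤ) (c : V), mul n vac c = if n = -1 then c else 0
  /-- Creation: `a(n)1 = 0` for `n ≥ 0`. -/
  creation : ∀ (n : ℤ) (a : V), 0 ≤ n → mul n a vac = 0
  /-- Creation: `a(−1)1 = a`. -/
  create_self : ∀ a : V, mul (-1) a vac = a

/-- The locality statement for a pair `(a,b)` with a specific witness `N`. -/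
def UniformVertexAlgebra.LocalityAt {V : Type*} [AddCommGroup V] [Module ℂ V]
    (A : UniformVertexAlgebra V) (a b : V) (N : ℕ) : Prop :=
  ∀ (p q : ℤ) (c : V),
    ∑ r ∈ Finset.range (N + 1),
      ((-1 : ℂ) ^ r * (N.choose r : ℂ)) •
        (A.mul (p + N - r) a (A.mul (q + r) b c) -
          A.mul (q + r) b (A.mul (p + N - r) a c)) = 0

/-- The generalized binomial coefficient `C(m, i) = m(m−1)⋯(m−i+1)/i!` as a complex number. -/
noncomputable def gbinom (m : ℤ) (i : ℕ) : ℂ :=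
  (∏ j ∈ Finset.range i, ((m : ℂ) - (j : ℂ))) / (i.factorial : ℂ)

/-!
The coefficients of `[F(z), G(t)]` form a function on `ℤ × ℤ`, and multiplication by `z - t` acts on
it, up to an index shift, as the forward difference in the direction `(1, -1)`. Locality therefore
says that `m ↦ [F(m), G(s - m)]` is annihilated by a power of the difference operator for every `s`,
and Newton's interpolation formula expands `[F(m), G(n)]` as `∑ C(m, i) (F₍ᵢ₎G)(m + n - i)`.

It remains to see that `a(z)₍ᵢ₎b(z)` is the field of `a(i)b`. It is local to all fields by Dong's
lemma and covariant under translation, so by Goddard's uniqueness theorem it is determined by the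
state it creates from the vacuum, which is `a(i)b`.
-/

open Finset
open scoped fwdDiff

theorem gbinom_eq_choose (m : ℤ) (i : ℕ) : gbinom m i = (Ring.choose m i : ℤ) := by
  have hcast : ((Ring.choose m i : ℤ) : ℂ) = Ring.choose (m : ℂ) i :=
    Ring.map_choose (Int.castRingHom ℂ) m i
  rw [hcast, Ring.choose_eq_smul, ← Polynomial.aeval_eq_smeval, Polynomial.aeval_def,
    Polynomial.eval₂_eq_eval_map, descPochhammer_map, descPochhammer_eval_eq_prod_range, gbinom,
    smul_eq_mul, div_eq_inv_mul]

section ForwardDifference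

variable {M M' G G' : Type*} [AddCommMonoid M] [AddCommMonoid M'] [AddCommGroup G]
  [AddCommGroup G']

open fwdDiff_aux

theorem fwdDiff_iter_sub (h : M) (n : ℕ) (f g : M → G) :
    Δ_[h] ^[n] (f - g) = Δ_[h] ^[n] f - Δ_[h] ^[n] g := by
  simpa only [coe_fwdDiffₗ_pow] using map_sub (fwdDiffₗ M G h ^ n) f g

theorem fwdDiff_iter_zero (h : M) (n : ℕ) : Δ_[h] ^[n] (0 : M → G) = 0 := by
  simpa only [coe_fwdDiffₗ_pow] using map_zero (fwdDiffₗ M G h ^ n)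

theorem fwdDiff_iter_succ_apply (h : M) (n : ℕ) (f : M → G) (y : M) :
    Δ_[h] ^[n + 1] f y = Δ_[h] ^[n] f (y + h) - Δ_[h] ^[n] f y := by
  rw [Function.iterate_succ_apply']
  rfl

theorem fwdDiff_iter_eq_zero_of_le {h : M} {f : M → G} {n k : ℕ} (hf : Δ_[h] ^[n] f = 0)
    (hnk : n ≤ k) : Δ_[h] ^[k] f = 0 := by
  rw [← Nat.sub_add_cancel hnk, Function.iterate_add_apply, hf, fwdDiff_iter_zero]

theorem fwdDiff_iter_eq_map_of_forall {u : M} {v : M'} {f : M → G} {g : M' → G'} {x : M} {y : M'}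
    (φ : G' →+ G) (hfg : ∀ k : ℕ, f (x + k • u) = φ (g (y + k • v))) (n : ℕ) :
    Δ_[u] ^[n] f x = φ (Δ_[v] ^[n] g y) := by
  simp only [fwdDiff_iter_eq_sum_shift, hfg, map_sum, map_zsmul]

theorem fwdDiff_iter_eq_of_forall_lt {h : M} {f : M → G} {y : M} {n : ℕ}
    (hf : ∀ k < n, f (y + k • h) = 0) : Δ_[h] ^[n] f y = f (y + n • h) := by
  rw [fwdDiff_iter_eq_sum_shift, sum_range_succ, sum_eq_zero fun k hk => ?_]
  · simp
  · rw [hf k (mem_range.mp hk), smul_zero]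

theorem fwdDiff_commute (u v : M) :
    Function.Commute (fwdDiff u : (M → G) → M → G) (fwdDiff v) := fun f => by
  funext x
  simp only [fwdDiff, add_right_comm x u v]
  abel

theorem fwdDiff_iter_eq_zero_of_add {u v : M} {f : M → G} {a b : ℕ}
    (huv : Δ_[u + v] ^[a] f = 0) (hu : Δ_[u] ^[b] f = 0) : Δ_[v] ^[a + b] f = 0 := by
  have hsplit : fwdDiffₗ M G v = fwdDiffₗ M G (u + v) + -(shiftₗ M G v * fwdDiffₗ M G u) := by
    ext g x
    simp [shiftₗ_apply, fwdDiff, add_right_comm x v u, add_assoc]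
  have hcomm (w : M) : Commute (fwdDiffₗ M G w) (fwdDiffₗ M G u) :=
    LinearMap.ext (fwdDiff_commute w u)
  have hshift (w : M) : Commute (shiftₗ M G v) (fwdDiffₗ M G w) := by
    refine LinearMap.ext fun g => funext fun x => ?_
    simp [shiftₗ_apply, fwdDiff, add_right_comm x w v]
  let I : Ideal (Module.End ℤ (M → G)) := Ideal.torsionOf _ _ f
  have huvI : fwdDiffₗ M G (u + v) ^ a ∈ I := by
    simpa [I, Ideal.mem_torsionOf_iff, ← coe_fwdDiffₗ_pow] using huv
  have huI : (-(shiftₗ M G v * fwdDiffₗ M G u)) ^ b ∈ I := by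
    rw [neg_pow, (hshift u).mul_pow, ← mul_assoc]
    refine I.mul_mem_left _ ?_
    simpa [I, Ideal.mem_torsionOf_iff, ← coe_fwdDiffₗ_pow] using hu
  have hvI : fwdDiffₗ M G v ^ (a + b) ∈ I := by
    rw [hsplit]
    exact Ideal.add_pow_mem_of_pow_mem_of_le_of_commute I huvI huI (Nat.le_succ _)
      (((hshift _).symm.mul_right (hcomm _)).neg_right)
  simpa [I, Ideal.mem_torsionOf_iff, ← coe_fwdDiffₗ_pow] using hvI

theorem sum_choose_succ_smul_fwdDiff_iter {h : M} {f : M → G} {N : ℕ} (hf : Δ_[h] ^[N] f = 0)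
    (m : ℤ) (y : M) :
    ∑ i ∈ range N, Ring.choose (m + 1) i • Δ_[h] ^[i] f y =
      ∑ i ∈ range N, Ring.choose m i • Δ_[h] ^[i] f (y + h) := by
  cases N with
  | zero => rfl
  | succ N =>
    have hshift (i : ℕ) : Δ_[h] ^[i] f (y + h) = Δ_[h] ^[i] f y + Δ_[h] ^[i + 1] f y := by
      rw [fwdDiff_iter_succ_apply, add_sub_cancel]
    simp only [hshift, smul_add, sum_add_distrib]
    rw [sum_range_succ', sum_range_succ' (fun i => Ring.choose m i • Δ_[h] ^[i] f y),
      sum_range_succ (fun i => Ring.choose m i • Δ_[h] ^[i + 1] f y), hf]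
    simp only [Ring.choose_succ_succ, add_smul, sum_add_distrib, Ring.choose_zero_right,
      Pi.zero_apply, smul_zero]
    abel

theorem shift_zsmul_eq_sum_fwdDiff_iter {E : Type*} [AddCommGroup E] {h : E} {f : E → G} {N : ℕ}
    (hf : Δ_[h] ^[N] f = 0) (m : ℤ) (y : E) :
    f (y + m • h) = ∑ i ∈ range N, Ring.choose m i • Δ_[h] ^[i] f y := by
  induction m using Int.induction_on generalizing y with
  | zero =>
    cases N with
    | zero => simpa using congrFun hf y
    | succ N => simp [sum_range_succ', Ring.choose_zero_succ]
  | succ m ih =>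
    rw [sum_choose_succ_smul_fwdDiff_iter hf, ← ih]
    congr 1
    module
  | pred m ih =>
    have hstep := sum_choose_succ_smul_fwdDiff_iter hf (-(m : ℤ) - 1) (y - h)
    rw [sub_add_cancel, sub_add_cancel] at hstep
    rw [← hstep, ← ih]
    congr 1
    module

end ForwardDifference

section LieRing

variable {L : Type*} [LieRing L]

/-- The coefficients `[F(m), G(n)]` of the commutator `[F(z), G(t)]` of two formal distributions
with values in a Lie ring, as a function on `ℤ × ℤ`. -/
def bracketCoeff (F G : ℤ → L) : ℤ × ℤ → L := fun p => ⁅F p.1, G p.2⁆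

/-- Mutual locality `(z - t)^N [F(z), G(t)] = 0` of two formal distributions. Multiplication by
`z - t` is the difference operator in the direction `(1, -1)` up to the index shift `(0, 1)`, which
does not affect vanishing. -/
def MutuallyLocal (F G : ℤ → L) : Prop := ∃ N : ℕ, Δ_[(1, -1)] ^[N] (bracketCoeff F G) = 0

/-- The product `F₍ᵢ₎G` of two formal distributions for `i ≥ 0`, that is, the residue in `z` of
`(z - t)^i [F(z), G(t)]`. -/
def residueProduct (i : ℕ) (F G : ℤ → L) : ℤ → L :=
  fun k => Δ_[(1, -1)] ^[i] (bracketCoeff F G) (0, k + i)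

/-- Translation covariance `[T, F(z)] = ∂F(z)` of a formal distribution. -/
def IsCovariant (T : L) (F : ℤ → L) : Prop := ∀ n : ℤ, ⁅T, F n⁆ = -(n • F (n - 1))

theorem MutuallyLocal.sub {F G H : ℤ → L} (hF : MutuallyLocal F H) (hG : MutuallyLocal G H) :
    MutuallyLocal (F - G) H := by
  obtain ⟨N, hN⟩ := hF
  obtain ⟨K, hK⟩ := hG
  refine ⟨max N K, ?_⟩
  have hsub : bracketCoeff (F - G) H = bracketCoeff F H - bracketCoeff G H :=
    funext fun p => sub_lie (F p.1) (G p.1) (H p.2)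
  rw [hsub, fwdDiff_iter_sub, fwdDiff_iter_eq_zero_of_le hN (le_max_left N K),
    fwdDiff_iter_eq_zero_of_le hK (le_max_right N K), sub_zero]

theorem IsCovariant.sub {T : L} {F G : ℤ → L} (hF : IsCovariant T F) (hG : IsCovariant T G) :
    IsCovariant T (F - G) := fun n => by
  simp only [Pi.sub_apply, lie_sub, hF n, hG n, smul_sub]
  abel

theorem lie_fwdDiff_iter_bracketCoeff {T : L} {F G : ℤ → L} (hF : IsCovariant T F)
    (hG : IsCovariant T G) (i : ℕ) (m n : ℤ) :
    ⁅T, Δ_[(1, -1)] ^[i] (bracketCoeff F G) (m, n)⁆ =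
      -(m • Δ_[(1, -1)] ^[i] (bracketCoeff F G) (m - 1, n)) -
        (n - i) • Δ_[(1, -1)] ^[i] (bracketCoeff F G) (m, n - 1) := by
  induction i generalizing m n with
  | zero =>
    rw [Nat.cast_zero, sub_zero, sub_eq_add_neg]
    simp only [Function.iterate_zero, id, bracketCoeff, leibniz_lie T, hF m, hG n, neg_lie, lie_neg,
      zsmul_lie, lie_zsmul]
  | succ i ih =>
    simp only [fwdDiff_iter_succ_apply, lie_sub, ih, Prod.mk_add_mk, sub_add_cancel,
      add_sub_cancel_right, ← sub_eq_add_neg]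
    push_cast
    module

protected theorem IsCovariant.residueProduct {T : L} {F G : ℤ → L} (hF : IsCovariant T F)
    (hG : IsCovariant T G) (i : ℕ) : IsCovariant T (residueProduct i F G) := fun k => by
  simp only [residueProduct]
  rw [lie_fwdDiff_iter_bracketCoeff hF hG, add_sub_cancel_right, zero_smul, neg_zero, zero_sub,
    add_sub_right_comm]

/-- The coefficients `[[F(m), G(n)], H(l)]` of the triple commutator `[[F(z), G(t)], H(w)]` of
formal distributions. -/
def tripleBracketCoeff (F G H : ℤ → L) : ℤ × ℤ × ℤ → L :=
  fun p => ⁅⁅F p.1, G p.2.1⁆, H p.2.2⁆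

theorem fwdDiff_iter_tripleBracketCoeff (F G H : ℤ → L) (i : ℕ) (m n l : ℤ) :
    Δ_[(1, -1, 0)] ^[i] (tripleBracketCoeff F G H) (m, n, l) =
      ⁅Δ_[(1, -1)] ^[i] (bracketCoeff F G) (m, n), H l⁆ :=
  fwdDiff_iter_eq_map_of_forall (AddMonoidHom.mk' (⁅·, H l⁆) (add_lie · · (H l)))
    (fun k => by simp [tripleBracketCoeff, bracketCoeff]) i

theorem fwdDiff_iter_tripleBracketCoeff_eq_zero {F G H : ℤ → L} {N₀ N₁ N₂ : ℕ}
    (hFG : Δ_[(1, -1)] ^[N₀] (bracketCoeff F G) = 0)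
    (hFH : Δ_[(1, -1)] ^[N₁] (bracketCoeff F H) = 0)
    (hGH : Δ_[(1, -1)] ^[N₂] (bracketCoeff G H) = 0) :
    Δ_[(0, 1, -1)] ^[N₁ + N₀ + N₂] (tripleBracketCoeff F G H) = 0 := by
  let P : ℤ × ℤ × ℤ → L := fun p => ⁅F p.1, ⁅G p.2.1, H p.2.2⁆⁆
  let Q : ℤ × ℤ × ℤ → L := fun p => ⁅G p.2.1, ⁅F p.1, H p.2.2⁆⁆
  have jacobi : tripleBracketCoeff F G H = P - Q := funext fun _ => lie_lie _ _ _
  have hP : Δ_[(0, 1, -1)] ^[N₂] P = 0 := by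
    funext ⟨m, n, l⟩
    rw [fwdDiff_iter_eq_map_of_forall (AddMonoidHom.mk' (⁅F m, ·⁆) (lie_add (F m)))
      (g := bracketCoeff G H) (y := (n, l)) (v := (1, -1)) (fun k => by simp [P, bracketCoeff]),
      hGH, Pi.zero_apply, map_zero, Pi.zero_apply]
  have hQ : Δ_[(1, -1, 0) + (0, 1, -1)] ^[N₁] Q = 0 := by
    funext ⟨m, n, l⟩
    rw [fwdDiff_iter_eq_map_of_forall (AddMonoidHom.mk' (⁅G n, ·⁆) (lie_add (G n)))
      (g := bracketCoeff F H) (y := (m, l)) (v := (1, -1)) (fun k => by simp [Q, bracketCoeff]),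
      hFH, Pi.zero_apply, map_zero, Pi.zero_apply]
  have hK : Δ_[(1, -1, 0)] ^[N₀] (tripleBracketCoeff F G H) = 0 := by
    funext ⟨m, n, l⟩
    rw [fwdDiff_iter_tripleBracketCoeff, hFG, Pi.zero_apply, zero_lie, Pi.zero_apply]
  -- `(t - w)^(N₁ + N₀)` is a combination of `(z - w)^N₁` and `(z - t)^N₀`.
  rw [Function.iterate_add_apply]
  apply fwdDiff_iter_eq_zero_of_add (u := (1, -1, 0))
  · rw [jacobi, fwdDiff_iter_sub, hP, fwdDiff_iter_sub, fwdDiff_iter_zero,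
      (fwdDiff_commute _ _).iterate_iterate, hQ, fwdDiff_iter_zero, sub_zero]
  · rw [(fwdDiff_commute _ _).iterate_iterate, hK, fwdDiff_iter_zero]

/-- **Dong's lemma**. -/
protected theorem MutuallyLocal.residueProduct {F G H : ℤ → L} (hFG : MutuallyLocal F G)
    (hFH : MutuallyLocal F H) (hGH : MutuallyLocal G H) (i : ℕ) :
    MutuallyLocal (residueProduct i F G) H := by
  obtain ⟨N₀, hN₀⟩ := hFG
  obtain ⟨N₁, hN₁⟩ := hFH
  obtain ⟨N₂, hN₂⟩ := hGH
  refine ⟨N₁ + N₀ + N₂, funext fun ⟨k, l⟩ => ?_⟩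
  have hslice : Δ_[(1, -1)] ^[N₁ + N₀ + N₂] (bracketCoeff (residueProduct i F G) H) (k, l) =
      Δ_[(0, 1, -1)] ^[N₁ + N₀ + N₂] (Δ_[(1, -1, 0)] ^[i] (tripleBracketCoeff F G H))
        (0, k + i, l) :=
    fwdDiff_iter_eq_map_of_forall (AddMonoidHom.id L) (fun r => by
      simp [fwdDiff_iter_tripleBracketCoeff, bracketCoeff, residueProduct,
        add_right_comm]) _
  rw [hslice, (fwdDiff_commute _ _).iterate_iterate,
    fwdDiff_iter_tripleBracketCoeff_eq_zero hN₀ hN₁ hN₂, fwdDiff_iter_zero]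
  rfl

theorem lie_eq_sum_choose_smul_residueProduct {F G : ℤ → L} {N : ℕ}
    (hN : Δ_[(1, -1)] ^[N] (bracketCoeff F G) = 0) (m n : ℤ) :
    ⁅F m, G n⁆ = ∑ i ∈ range N, Ring.choose m i • residueProduct i F G (m + n - i) := by
  have hnewton := shift_zsmul_eq_sum_fwdDiff_iter hN m (0, m + n)
  simpa [bracketCoeff, residueProduct] using hnewton

end LieRing

theorem eq_zero_of_map_eq_neg_zsmul {W : Type*} [AddCommGroup W] [Module.IsTorsionFree ℤ W]
    (T : W →+ W) {v : ℤ → W} (hT : ∀ n, T (v n) = -(n • v (n - 1)))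
    (hv : ∀ n, -1 ≤ n → v n = 0) : v = 0 := by
  have hdown (n : ℤ) (hn : n ≤ -1) : v n = 0 := by
    induction n, hn using Int.leInductionDown with
    | base => exact hv (-1) le_rfl
    | pred n hn ih =>
      have hsmul : n • v (n - 1) = 0 := by simpa [ih] using hT n
      exact (smul_eq_zero.mp hsmul).resolve_left (by omega)
  exact funext fun n => (le_total (-1) n).elim (hv n) (hdown n)

namespace UniformVertexAlgebra

attribute [local instance] LieRing.ofAssociativeRing

variable {V : Type*} [AddCommGroup V] [Module ℂ V] (A : UniformVertexAlgebra V)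

/-- The field `a(z)`, given by its modes `a(n)`. -/
def field (a : V) : ℤ → Module.End ℂ V := fun n => A.mul n a

variable {A} in
theorem LocalityAt.fwdDiff_iter_bracketCoeff_eq_zero {a b : V} {N : ℕ} (h : A.LocalityAt a b N) :
    Δ_[(1, -1)] ^[N] (bracketCoeff (A.field a) (A.field b)) = 0 := by
  funext ⟨p, q⟩
  ext c
  rw [fwdDiff_iter_eq_sum_shift, ← sum_flip, LinearMap.sum_apply]
  refine Eq.trans (sum_congr rfl fun r hr => ?_) (h p (q - N) c)
  have hrN : r ≤ N := by grind
  have hfst : p + ((N - r : ℕ) : ℤ) = p + N - r := by push_cast [hrN]; ring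
  have hsnd : q + -((N - r : ℕ) : ℤ) = q - N + r := by push_cast [hrN]; ring
  simp [bracketCoeff, field, Ring.lie_def, hfst, hsnd, Nat.choose_symm hrN, Nat.sub_sub_self hrN,
    ← Int.cast_smul_eq_zsmul ℂ]

theorem mutuallyLocal_field (a b : V) : MutuallyLocal (A.field a) (A.field b) :=
  (A.locality a b).imp fun _ h => LocalityAt.fwdDiff_iter_bracketCoeff_eq_zero h

theorem isCovariant_field (a : V) : IsCovariant A.T (A.field a) := fun n => by
  ext c
  simpa [field, Ring.lie_def] using A.translation n a c

theorem eq_zero_of_mutuallyLocal_field {F : ℤ → Module.End ℂ V}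
    (hloc : ∀ d, MutuallyLocal F (A.field d)) (hvac : ∀ n, F n A.vac = 0) : F = 0 := by
  funext m
  ext d
  obtain ⟨N, hN⟩ := hloc d
  let vacCoeff : ℤ × ℤ → V := fun p => F p.1 (A.mul p.2 d A.vac)
  have heval : Δ_[(1, -1)] ^[N] vacCoeff (m - N, N - 1) = 0 := by
    rw [fwdDiff_iter_eq_map_of_forall (LinearMap.applyₗ A.vac).toAddMonoidHom
      (g := bracketCoeff F (A.field d)) (y := (m - N, N - 1)) (v := (1, -1)) (fun k => by
        simp [vacCoeff, bracketCoeff, field, Ring.lie_def, hvac]), hN]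
    rfl
  have hlead : Δ_[(1, -1)] ^[N] vacCoeff (m - N, N - 1) = F m d := by
    rw [fwdDiff_iter_eq_of_forall_lt fun k hk => ?_]
    · have hindex : (N : ℤ) - 1 + -N = -1 := by ring
      simp [vacCoeff, hindex, A.create_self]
    · have hindex : 0 ≤ (N : ℤ) - 1 + -k := by omega
      simp [vacCoeff, A.creation _ d hindex]
  exact hlead.symm.trans heval

/-- **Goddard's uniqueness theorem**. -/
theorem eq_field_of_mutuallyLocal {F : ℤ → Module.End ℂ V} {a : V}
    (hloc : ∀ d, MutuallyLocal F (A.field d)) (hcov : IsCovariant A.T F)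
    (hcreation : ∀ n, 0 ≤ n → F n A.vac = 0) (hself : F (-1) A.vac = a) : F = A.field a := by
  have : IsAddTorsionFree V := .of_isTorsionFree ℂ V
  refine sub_eq_zero.mp <| A.eq_zero_of_mutuallyLocal_field
    (fun d => (hloc d).sub (A.mutuallyLocal_field a d)) fun n => ?_
  refine congrFun (eq_zero_of_map_eq_neg_zsmul (v := fun n => (F - A.field a) n A.vac)
    A.T.toAddMonoidHom (fun n => ?_) fun n hn => ?_) n
  · simpa [Ring.lie_def, A.T_vac] using
      LinearMap.congr_fun (hcov.sub (A.isCovariant_field a) n) A.vac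
  · rcases hn.eq_or_lt with rfl | hn
    · simp [field, hself, A.create_self]
    · simp [field, hcreation n (by omega), A.creation n a (by omega)]

theorem residueProduct_field_apply_vac (a b : V) (i : ℕ) {n : ℤ} (hn : -1 ≤ n) :
    residueProduct i (A.field a) (A.field b) n A.vac = A.mul i a (A.mul n b A.vac) := by
  let vacCoeff : ℤ × ℤ → V := fun p => bracketCoeff (A.field a) (A.field b) p A.vac
  have hvacCoeff (k : ℕ) :
      vacCoeff ((0, n + i) + k • (1, -1)) = A.mul k a (A.mul (n + i - k) b A.vac) := by
    simp [vacCoeff, bracketCoeff, field, Ring.lie_def, A.creation k a k.cast_nonneg,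
      ← sub_eq_add_neg]
  have hlead : Δ_[(1, -1)] ^[i] vacCoeff (0, n + i) = A.mul i a (A.mul n b A.vac) := by
    rw [fwdDiff_iter_eq_of_forall_lt fun k hk => ?_, hvacCoeff, add_sub_cancel_right]
    rw [hvacCoeff, A.creation _ b (by omega), map_zero]
  rw [← hlead]
  exact (fwdDiff_iter_eq_map_of_forall (f := vacCoeff) (LinearMap.applyₗ A.vac).toAddMonoidHom
    (fun _ => rfl) i).symm

theorem residueProduct_field (a b : V) (i : ℕ) :
    residueProduct i (A.field a) (A.field b) = A.field (A.mul i a b) := by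
  refine A.eq_field_of_mutuallyLocal
    (fun d => (A.mutuallyLocal_field a b).residueProduct (A.mutuallyLocal_field a d)
      (A.mutuallyLocal_field b d) i)
    ((A.isCovariant_field a).residueProduct (A.isCovariant_field b) i) (fun n hn => ?_) ?_
  · rw [A.residueProduct_field_apply_vac a b i (by omega), A.creation n b hn, map_zero]
  · rw [A.residueProduct_field_apply_vac a b i le_rfl, A.create_self]

variable {A} in
theorem LocalityAt.mul_eq_zero {a b : V} {N : ℕ} (h : A.LocalityAt a b N) {i : ℕ} (hi : N ≤ i) :
    A.mul i a b = 0 := by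
  rw [← A.create_self (A.mul i a b)]
  change A.field (A.mul i a b) (-1) A.vac = 0
  rw [← residueProduct_field, residueProduct,
    fwdDiff_iter_eq_zero_of_le h.fwdDiff_iter_bracketCoeff_eq_zero hi]
  rfl

variable {A} in
theorem LocalityAt.commutator_eq_sum {a b : V} {N : ℕ} (h : A.LocalityAt a b N) (m n : ℤ) (c : V) :
    A.mul m a (A.mul n b c) - A.mul n b (A.mul m a c) =
      ∑ i ∈ range (N + 1), gbinom m i • A.mul (m + n - i) (A.mul i a b) c := by
  have hvanish := fwdDiff_iter_eq_zero_of_le h.fwdDiff_iter_bracketCoeff_eq_zero N.le_succ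
  have hexpand := LinearMap.congr_fun (lie_eq_sum_choose_smul_residueProduct hvanish m n) c
  simpa [A.residueProduct_field, field, Ring.lie_def, gbinom_eq_choose, Int.cast_smul_eq_zsmul]
    using hexpand

end UniformVertexAlgebra

/-- the commutator formula
`a(m)(b(n)c) − b(n)(a(m)c) = Σ_{i≥0} C(m,i) (a(i)b)(m+n−i)c`, with only finitely many
nonzero terms. -/
theorem commutator_formula {V : Type*} [AddCommGroup V] [Module ℂ V]
    (A : UniformVertexAlgebra V) (a b c : V) (m n : ℤ) :
    ∃ M : ℕ, (∀ i : ℤ, (M : ℤ) < i → A.mul i a b = 0) ∧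
      A.mul m a (A.mul n b c) - A.mul n b (A.mul m a c) =
        ∑ i ∈ Finset.range (M + 1),
          gbinom m i • A.mul (m + n - i) (A.mul i a b) c := by
  obtain ⟨N, hN : A.LocalityAt a b N⟩ := A.locality a b
  refine ⟨N, fun i hi => ?_, hN.commutator_eq_sum m n c⟩
  lift i to ℕ using by omega
  exact hN.mul_eq_zero (by omega)
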